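/- Let 0 < r < ∞ and let κ_r be the unique number in (0,∞) with lim_{k→∞} (1/k) log Σ_{σ∈Ω_k} (μ_h(J_σ) ‖φ'_σ‖^r)^{κ_r/(r+κ_r)} = 0, and set L := η^3 ξ^{3h}. Then for any finite maximal antichain Γ: (a) L^{-1} Σ_{σ∈Γ} μ_h(J_σ) (μ_h ∘ φ_σ^{-1}) ≤ μ_h ≤ L Σ_{σ∈Γ} μ_h(J_σ) (μ_h ∘ φ_σ^{-1}) as measures; and (b) (Lξ^r)^{-3κ_r/(r+κ_r)} ≤ Σ_{σ∈Γ} (μ_h(J_σ) ‖φ'_σ‖^r)^{κ_r/(r+κ_r)} ≤ (Lξ^r)^{3κ_r/(r+κ_r)}. -/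

import Mathlib

open MeasureTheory Filter Metric

noncomputable section

/-- A cookie-cutter system on `J = [0,1]`. -/
structure CookieCutter where
  N : ℕ
  hN : 2 ≤ N
  Jsub : Fin N → Set ℝ
  f : ℝ → ℝ
  φ : Fin N → ℝ → ℝ
  c : ℝ
  γ : ℝ
  b : ℝ
  B : ℝ
  hJsub_sub : ∀ j, Jsub j ⊆ Set.Icc 0 1
  hJsub_interval : ∀ j, ∃ u v : ℝ, u ≤ v ∧ Jsub j = Set.Icc u v
  hJsub_disj : ∀ i j, i ≠ j → Disjoint (Jsub i) (Jsub j)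
  hbij : ∀ j, Set.BijOn f (Jsub j) (Set.Icc 0 1)
  hφ_maps : ∀ j, ∀ x ∈ Set.Icc (0:ℝ) 1, φ j x ∈ Jsub j
  hφ_rinv : ∀ j, ∀ x ∈ Set.Icc (0:ℝ) 1, f (φ j x) = x
  hφ_linv : ∀ j, ∀ x ∈ Jsub j, φ j (f x) = x
  hfdiff : ∀ j, ∀ x ∈ Jsub j, DifferentiableAt ℝ f x
  hφdiff : ∀ j, ∀ x ∈ Set.Icc (0:ℝ) 1, DifferentiableAt ℝ (φ j) x
  hc : 0 < c
  hγ : γ ∈ Set.Ioc (0:ℝ) 1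
  hHolder : ∀ j, ∀ x ∈ Jsub j, ∀ y ∈ Jsub j, |deriv f x - deriv f y| ≤ c * |x - y| ^ γ
  hb : IsGLB ((fun x => |deriv f x|) '' ⋃ j, Jsub j) b
  hB : IsLUB ((fun x => |deriv f x|) '' ⋃ j, Jsub j) B
  hb1 : 1 < b

namespace CookieCutter

variable (cc : CookieCutter)

/-- `φ_σ = φ_{σ_1} ∘ ⋯ ∘ φ_{σ_n}` for a word `σ`. -/
def wordMap : List (Fin cc.N) → ℝ → ℝ
  | [] => id
  | j :: rest => cc.φ j ∘ wordMap rest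

/-- The basic interval `J_σ = φ_σ(J)`. -/
def Jc (σ : List (Fin cc.N)) : Set ℝ := cc.wordMap σ '' Set.Icc 0 1

/-- The diameter `|J_σ|`. -/
def diamJ (σ : List (Fin cc.N)) : ℝ := Metric.diam (cc.Jc σ)

/-- `‖φ'_σ‖ = sup_{x ∈ J} |φ'_σ(x)|`. -/
def φnorm (σ : List (Fin cc.N)) : ℝ :=
  sSup ((fun x => |deriv (cc.wordMap σ) x|) '' Set.Icc 0 1)

/-- The distortion constant `ξ = exp (c / (b^γ − 1))`. -/
def xi : ℝ := Real.exp (cc.c / (cc.b ^ cc.γ - 1))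

/-- The cookie-cutter set `E = ⋂_{n ≥ 1} ⋃_{σ ∈ Ω_n} J_σ`. -/
def E : Set ℝ := ⋂ (n : ℕ) (_ : 1 ≤ n), ⋃ σ : Fin n → Fin cc.N, cc.Jc (List.ofFn σ)

/-- `η = ξ^{9h}`. -/
def eta (h : ℝ) : ℝ := cc.xi ^ ((9:ℝ) * h)

/-- `L = η³ ξ^{3h}`. -/
def Lconst (h : ℝ) : ℝ := (cc.eta h) ^ 3 * cc.xi ^ ((3:ℝ) * h)

/-- A Gibbs-like measure for the cookie-cutter system: a Borel probability measure
supported on `E` with `η⁻¹|J_σ|^h ≤ μ(J_σ) ≤ η|J_σ|^h` for every word `σ`. -/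
def IsGibbsLike (μ : Measure ℝ) (h : ℝ) : Prop :=
  IsProbabilityMeasure μ ∧ μ (cc.Eᶜ) = 0 ∧
    ∀ σ : List (Fin cc.N), σ ≠ [] →
      (cc.eta h)⁻¹ * cc.diamJ σ ^ h ≤ (μ (cc.Jc σ)).toReal ∧
      (μ (cc.Jc σ)).toReal ≤ cc.eta h * cc.diamJ σ ^ h

/-- A finite maximal antichain in `Ω`. -/
def IsFMA (Γ : Finset (List (Fin cc.N))) : Prop :=
  (∀ σ ∈ Γ, σ ≠ []) ∧
  (∀ ω : ℕ → Fin cc.N, ∃ k : ℕ, 1 ≤ k ∧ (List.ofFn fun i : Fin k => ω i) ∈ Γ) ∧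
  ∀ σ ∈ Γ, ∀ τ ∈ Γ, σ <+: τ → σ = τ

end CookieCutter

/-- The `n`-th quantization error of order `r`. -/
def Vnr (μ : Measure ℝ) (n : ℕ) (r : ℝ) : ℝ :=
  sInf ((fun α : Finset ℝ => ∫ x, Metric.infDist x (α : Set ℝ) ^ r ∂μ) ''
    {α : Finset ℝ | α.Nonempty ∧ α.card ≤ n})

/-- The auxiliary quantization error `u_{n,r}` with `U = (0,1)`. -/
def unr (μ : Measure ℝ) (n : ℕ) (r : ℝ) : ℝ :=
  sInf ((fun α : Finset ℝ =>
      ∫ x, Metric.infDist x ((α : Set ℝ) ∪ (Set.Ioo (0:ℝ) 1)ᶜ) ^ r ∂μ) ''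
    {α : Finset ℝ | α.card ≤ n})

/-!
By bounded distortion `‖φ'_σ‖` is multiplicative under juxtaposition of words up to the factor `ξ`.
A Gibbs-like measure makes `μ(J_σ)` comparable with `‖φ'_σ‖^h`, hence multiplicative up to `L`, and
`(μ(J_σ) ‖φ'_σ‖^r)^s` multiplicative up to `M = (L ξ^r)^s`.

If a weight `a` is multiplicative up to `M` and its sums `S_n = ∑_{σ ∈ Ω_n} a σ` have exponential
growth rate `0`, then Fekete's lemma, applied to `log (M S_n)` and `- log (S_n / M)`, gives
`M⁻¹ ≤ S_n ≤ M` for every `n`. Splitting the words of a large length `n` at their prefixes in `Γ`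
shows that `S_n` agrees up to `M` with `∑_{σ ∈ Γ} a σ S_{n - |σ|}`, hence `∑_{σ ∈ Γ} a σ` agrees
with `1` up to `M³`.

For the measures, `∑_{σ ∈ Γ} μ(J_σ) (μ ∘ φ_σ⁻¹)` gives mass `μ(J_σ) μ(J_τ)` to `J_{στ}` when
`σ ∈ Γ`, which is `μ(J_{στ})` up to `L`. The `J_{στ}` form arbitrarily fine partitions of almost all
of both measures, and a comparison on such partitions extends to closed sets by approximation from
outside, then to Borel sets by inner regularity.
-/

section Words

variable {α : Type*}

/-- The finset of words of length `n` over a finite alphabet. -/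
def wordsOfLength (α : Type*) [Fintype α] (n : ℕ) : Finset (List α) :=
  Finset.univ.map ⟨fun σ : Fin n → α => List.ofFn σ, List.ofFn_injective⟩

/-- A finite antichain for the prefix order through which every word of length at least `n` passes:
the notion of finite maximal antichain, with a bound `n` on the lengths of its words. -/
structure IsPrefixCut (Γ : Finset (List α)) (n : ℕ) : Prop where
  antichain : IsAntichain (· <+: ·) (Γ : Set (List α))
  length_le : ∀ σ ∈ Γ, σ.length ≤ n
  exists_prefix : ∀ w : List α, n ≤ w.length → ∃ σ ∈ Γ, σ <+: w

lemma IsPrefixCut.mono {Γ : Finset (List α)} {m n : ℕ} (hΓ : IsPrefixCut Γ m) (hmn : m ≤ n) :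
    IsPrefixCut Γ n where
  antichain := hΓ.antichain
  length_le σ hσ := (hΓ.length_le σ hσ).trans hmn
  exists_prefix w hw := hΓ.exists_prefix w (hmn.trans hw)

variable [Fintype α]

@[simp]
lemma mem_wordsOfLength {n : ℕ} {w : List α} : w ∈ wordsOfLength α n ↔ w.length = n := by
  simp only [wordsOfLength, Finset.mem_map, Finset.mem_univ, true_and,
    Function.Embedding.coeFn_mk]
  constructor
  · rintro ⟨σ, rfl⟩
    exact List.length_ofFn
  · rintro rfl
    exact ⟨w.get, List.ofFn_get w⟩

lemma sum_wordsOfLength {M : Type*} [AddCommMonoid M] (n : ℕ) (g : List α → M) :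
    ∑ w ∈ wordsOfLength α n, g w = ∑ σ : Fin n → α, g (List.ofFn σ) :=
  Finset.sum_map _ _ _

lemma isPrefixCut_wordsOfLength (n : ℕ) : IsPrefixCut (wordsOfLength α n) n where
  antichain σ hσ τ hτ hne hpre :=
    hne <| hpre.eq_of_length <|
      (mem_wordsOfLength.1 hσ).trans (mem_wordsOfLength.1 hτ).symm
  length_le _ hσ := (mem_wordsOfLength.1 hσ).le
  exists_prefix w hw := ⟨w.take n, by simpa using hw, List.take_prefix n w⟩

lemma IsPrefixCut.sum_wordsOfLength_eq {M : Type*} [AddCommMonoid M] {Γ : Finset (List α)} {n : ℕ}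
    (hΓ : IsPrefixCut Γ n) (g : List α → M) :
    ∑ w ∈ wordsOfLength α n, g w =
      ∑ σ ∈ Γ, ∑ τ ∈ wordsOfLength α (n - σ.length), g (σ ++ τ) := by
  rw [Finset.sum_sigma']
  symm
  refine Finset.sum_nbij (fun p => p.1 ++ p.2) ?_ ?_ ?_ fun _ _ => rfl
  · rintro ⟨σ, τ⟩ hp
    simp only [Finset.mem_sigma, mem_wordsOfLength] at hp
    have := hΓ.length_le σ hp.1
    simp only [mem_wordsOfLength, List.length_append]
    omega
  · rintro ⟨σ, τ⟩ hp ⟨σ', τ'⟩ hp' heq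
    simp only [Finset.coe_sigma, Set.mem_sigma_iff, Finset.mem_coe] at hp hp' heq
    obtain rfl : σ = σ' := by
      rcases List.prefix_or_prefix_of_prefix (List.prefix_append σ τ)
        (heq ▸ List.prefix_append σ' τ') with hpre | hpre
      · exact hΓ.antichain.eq hp.1 hp'.1 hpre
      · exact (hΓ.antichain.eq hp'.1 hp.1 hpre).symm
    rw [List.append_cancel_left heq]
  · intro w hw
    have hw : w.length = n := by simpa using hw
    obtain ⟨σ, hσ, τ, rfl⟩ := hΓ.exists_prefix w hw.ge
    refine ⟨⟨σ, τ⟩, ?_, rfl⟩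
    simp only [Finset.coe_sigma, Set.mem_sigma_iff, Finset.mem_coe, mem_wordsOfLength]
    rw [List.length_append] at hw
    exact ⟨hσ, by omega⟩

end Words

section Fekete

lemma natCast_mul_le_of_subadditive {u : ℕ → ℝ} {l : ℝ} (hu : Subadditive u)
    (hlim : Tendsto (fun n => u n / n) atTop (nhds l)) (n : ℕ) : n * l ≤ u n := by
  obtain rfl | hn := eq_or_ne n 0
  · simpa using hu 0 0
  · have hl : hu.lim = l := tendsto_nhds_unique (hu.tendsto_lim hlim.bddBelow_range) hlim
    have h := hu.lim_le_div hlim.bddBelow_range hn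
    rwa [hl, le_div_iff₀ (by positivity), mul_comm] at h

variable {S : ℕ → ℝ} {M l : ℝ}

lemma exp_le_of_quasi_submultiplicative (hM : 0 < M) (hS : ∀ n, 0 < S n)
    (hsub : ∀ m n, S (m + n) ≤ M * (S m * S n))
    (hlim : Tendsto (fun n : ℕ => (1 / (n : ℝ)) * Real.log (S n)) atTop (nhds l)) (n : ℕ) :
    Real.exp (n * l) ≤ M * S n := by
  have hMS : ∀ n, 0 < M * S n := fun n => mul_pos hM (hS n)
  rw [← Real.le_log_iff_exp_le (hMS n)]
  refine natCast_mul_le_of_subadditive (u := fun n => Real.log (M * S n)) (fun m n => ?_) ?_ n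
  · rw [← Real.log_mul (hMS m).ne' (hMS n).ne']
    refine Real.log_le_log (hMS _) ?_
    calc M * S (m + n) ≤ M * (M * (S m * S n)) := mul_le_mul_of_nonneg_left (hsub m n) hM.le
      _ = M * S m * (M * S n) := by ring
  · have hconst := (tendsto_one_div_atTop_nhds_zero_nat (𝕜 := ℝ)).mul_const (Real.log M)
    convert hconst.add hlim using 2 with n
    · rw [Real.log_mul hM.ne' (hS n).ne']
      ring
    · ring

lemma le_exp_of_quasi_supermultiplicative (hM : 0 < M) (hS : ∀ n, 0 < S n)
    (hsup : ∀ m n, S m * S n ≤ M * S (m + n))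
    (hlim : Tendsto (fun n : ℕ => (1 / (n : ℝ)) * Real.log (S n)) atTop (nhds l)) (n : ℕ) :
    S n ≤ M * Real.exp (n * l) := by
  have h := exp_le_of_quasi_submultiplicative (S := fun n => (S n)⁻¹) (l := -l) hM
    (fun n => inv_pos.2 (hS n)) (fun m n => ?_) (by simpa [Real.log_inv] using hlim.neg) n
  · rwa [mul_neg, Real.exp_neg, ← div_eq_mul_inv, inv_eq_one_div,
      div_le_div_iff₀ (Real.exp_pos _) (hS n), one_mul] at h
  · have := hS m
    have := hS n
    rw [← mul_inv, ← div_eq_mul_inv, inv_eq_one_div, div_le_div_iff₀ (hS _) (by positivity),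
      one_mul]
    exact hsup m n

end Fekete

section QuasiMultiplicative

variable {α : Type*}

/-- A positive weight on words which is multiplicative under juxtaposition up to the factor `M`.
The empty word is not excluded, so that `M` is automatically positive. -/
structure IsQuasiMultiplicative (a : List α → ℝ) (M : ℝ) : Prop where
  pos : ∀ σ, 0 < a σ
  append_le : ∀ σ τ, a (σ ++ τ) ≤ M * (a σ * a τ)
  mul_le : ∀ σ τ, a σ * a τ ≤ M * a (σ ++ τ)

namespace IsQuasiMultiplicative

variable {a b : List α → ℝ} {M M' : ℝ}

lemma const_pos (ha : IsQuasiMultiplicative a M) : 0 < M :=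
  pos_of_mul_pos_left ((ha.pos _).trans_le (ha.append_le [] []))
    (mul_pos (ha.pos []) (ha.pos [])).le

lemma mul (ha : IsQuasiMultiplicative a M) (hb : IsQuasiMultiplicative b M') :
    IsQuasiMultiplicative (fun σ => a σ * b σ) (M * M') where
  pos σ := mul_pos (ha.pos σ) (hb.pos σ)
  append_le σ τ := by
    refine (mul_le_mul (ha.append_le σ τ) (hb.append_le σ τ) (hb.pos _).le
      ((ha.pos _).le.trans (ha.append_le σ τ))).trans_eq ?_
    ring
  mul_le σ τ := by
    rw [mul_mul_mul_comm, mul_mul_mul_comm M]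
    exact mul_le_mul (ha.mul_le σ τ) (hb.mul_le σ τ) (mul_pos (hb.pos σ) (hb.pos τ)).le
      (mul_pos ha.const_pos (ha.pos _)).le

lemma rpow (ha : IsQuasiMultiplicative a M) {s : ℝ} (hs : 0 ≤ s) :
    IsQuasiMultiplicative (fun σ => a σ ^ s) (M ^ s) where
  pos σ := Real.rpow_pos_of_pos (ha.pos σ) s
  append_le σ τ := by
    have hσ := (ha.pos σ).le
    have hτ := (ha.pos τ).le
    rw [← Real.mul_rpow hσ hτ, ← Real.mul_rpow ha.const_pos.le (mul_nonneg hσ hτ)]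
    exact Real.rpow_le_rpow (ha.pos _).le (ha.append_le σ τ) hs
  mul_le σ τ := by
    have hσ := (ha.pos σ).le
    have hτ := (ha.pos τ).le
    rw [← Real.mul_rpow hσ hτ, ← Real.mul_rpow ha.const_pos.le (ha.pos _).le]
    exact Real.rpow_le_rpow (mul_nonneg hσ hτ) (ha.mul_le σ τ) hs

lemma of_comparable (ha : IsQuasiMultiplicative a M) {K K' : ℝ} (hK : 0 ≤ K) (hKK' : K ≤ K')
    (hba : ∀ σ, b σ ≤ K * a σ) (hab : ∀ σ, a σ ≤ K' * b σ) :
    IsQuasiMultiplicative b (K * K' ^ 2 * M) := by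
  have hK' : 0 ≤ K' := hK.trans hKK'
  have hM := ha.const_pos
  have hb : ∀ σ, 0 < b σ := fun σ =>
    pos_of_mul_pos_right ((ha.pos σ).trans_le (hab σ)) hK'
  refine ⟨hb, fun σ τ => ?_, fun σ τ => ?_⟩
  · calc b (σ ++ τ) ≤ K * (M * (a σ * a τ)) :=
          (hba _).trans (mul_le_mul_of_nonneg_left (ha.append_le σ τ) hK)
      _ ≤ K * (M * (K' * b σ * (K' * b τ))) := by
          have := (ha.pos τ).le
          have := (hb σ).le
          gcongr
          exacts [hab σ, hab τ]
      _ = K * K' ^ 2 * M * (b σ * b τ) := by ring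
  · calc b σ * b τ ≤ K * a σ * (K * a τ) :=
          mul_le_mul (hba σ) (hba τ) (hb τ).le (mul_nonneg hK (ha.pos σ).le)
      _ = K * (K * (a σ * a τ)) := by ring
      _ ≤ K * (K' * (M * (K' * b (σ ++ τ)))) := by
          have haστ : a σ * a τ ≤ M * (K' * b (σ ++ τ)) :=
            (ha.mul_le σ τ).trans (mul_le_mul_of_nonneg_left (hab _) hM.le)
          have := (mul_pos (ha.pos σ) (ha.pos τ)).le
          exact mul_le_mul_of_nonneg_left (mul_le_mul hKK' haστ this hK') hK
      _ = K * K' ^ 2 * M * b (σ ++ τ) := by ring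

variable [Fintype α]

/-- The total weight `∑_{σ ∈ Ω_n} a σ` of the words of length `n`. -/
def levelSum (a : List α → ℝ) (n : ℕ) : ℝ := ∑ w ∈ wordsOfLength α n, a w

lemma levelSum_pos [Nonempty α] (ha : IsQuasiMultiplicative a M) (n : ℕ) : 0 < levelSum a n :=
  Finset.sum_pos (fun w _ => ha.pos w)
    ⟨List.replicate n (Classical.arbitrary α), mem_wordsOfLength.2 List.length_replicate⟩

variable {Γ : Finset (List α)} {n : ℕ}

lemma levelSum_le_sum_mul_levelSum (ha : IsQuasiMultiplicative a M) (hΓ : IsPrefixCut Γ n) :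
    levelSum a n ≤ M * ∑ σ ∈ Γ, a σ * levelSum a (n - σ.length) := by
  simp only [levelSum, hΓ.sum_wordsOfLength_eq, Finset.mul_sum]
  exact Finset.sum_le_sum fun σ _ => Finset.sum_le_sum fun τ _ => ha.append_le σ τ

lemma sum_mul_levelSum_le_levelSum (ha : IsQuasiMultiplicative a M) (hΓ : IsPrefixCut Γ n) :
    ∑ σ ∈ Γ, a σ * levelSum a (n - σ.length) ≤ M * levelSum a n := by
  simp only [levelSum, hΓ.sum_wordsOfLength_eq, Finset.mul_sum]
  exact Finset.sum_le_sum fun σ _ => Finset.sum_le_sum fun τ _ => ha.mul_le σ τ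

lemma sum_mul_levelSum_wordsOfLength (a : List α → ℝ) (m n : ℕ) :
    ∑ σ ∈ wordsOfLength α m, a σ * levelSum a (m + n - σ.length) =
      levelSum a m * levelSum a n := by
  rw [levelSum, Finset.sum_mul]
  refine Finset.sum_congr rfl fun σ hσ => ?_
  rw [mem_wordsOfLength.1 hσ, Nat.add_sub_cancel_left]

variable [Nonempty α]

lemma one_le_mul_levelSum (ha : IsQuasiMultiplicative a M)
    (hlim : Tendsto (fun n : ℕ => (1 / (n : ℝ)) * Real.log (levelSum a n)) atTop (nhds 0))
    (n : ℕ) : 1 ≤ M * levelSum a n := by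
  simpa using exp_le_of_quasi_submultiplicative ha.const_pos ha.levelSum_pos (fun m n => by
    rw [← sum_mul_levelSum_wordsOfLength]
    exact ha.levelSum_le_sum_mul_levelSum
      ((isPrefixCut_wordsOfLength m).mono (m.le_add_right n))) hlim n

lemma levelSum_le (ha : IsQuasiMultiplicative a M)
    (hlim : Tendsto (fun n : ℕ => (1 / (n : ℝ)) * Real.log (levelSum a n)) atTop (nhds 0))
    (n : ℕ) : levelSum a n ≤ M := by
  simpa using le_exp_of_quasi_supermultiplicative ha.const_pos ha.levelSum_pos (fun m n => by
    rw [← sum_mul_levelSum_wordsOfLength]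
    exact ha.sum_mul_levelSum_le_levelSum
      ((isPrefixCut_wordsOfLength m).mono (m.le_add_right n))) hlim n

theorem sum_isPrefixCut_le (ha : IsQuasiMultiplicative a M)
    (hlim : Tendsto (fun n : ℕ => (1 / (n : ℝ)) * Real.log (levelSum a n)) atTop (nhds 0))
    (hΓ : IsPrefixCut Γ n) : ∑ σ ∈ Γ, a σ ≤ M ^ 3 := by
  have hM := ha.const_pos
  calc ∑ σ ∈ Γ, a σ ≤ ∑ σ ∈ Γ, a σ * (M * levelSum a (n - σ.length)) :=
        Finset.sum_le_sum fun σ _ =>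
          le_mul_of_one_le_right (ha.pos σ).le (ha.one_le_mul_levelSum hlim _)
    _ = M * ∑ σ ∈ Γ, a σ * levelSum a (n - σ.length) := by
        simp only [Finset.mul_sum, mul_left_comm]
    _ ≤ M * (M * M) := by
        gcongr
        refine (ha.sum_mul_levelSum_le_levelSum hΓ).trans ?_
        gcongr
        exact ha.levelSum_le hlim n
    _ = M ^ 3 := by ring

theorem inv_le_sum_isPrefixCut (ha : IsQuasiMultiplicative a M)
    (hlim : Tendsto (fun n : ℕ => (1 / (n : ℝ)) * Real.log (levelSum a n)) atTop (nhds 0))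
    (hΓ : IsPrefixCut Γ n) : (M ^ 3)⁻¹ ≤ ∑ σ ∈ Γ, a σ := by
  have hM := ha.const_pos
  rw [inv_le_iff_one_le_mul₀' (by positivity)]
  calc 1 ≤ M * levelSum a n := ha.one_le_mul_levelSum hlim n
    _ ≤ M * (M * ∑ σ ∈ Γ, a σ * levelSum a (n - σ.length)) := by
        gcongr
        exact ha.levelSum_le_sum_mul_levelSum hΓ
    _ ≤ M * (M * ∑ σ ∈ Γ, a σ * M) := by
        gcongr with σ
        · exact (ha.pos σ).le
        · exact ha.levelSum_le hlim _
    _ = M ^ 3 * ∑ σ ∈ Γ, a σ := by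
        rw [← Finset.sum_mul]
        ring

end IsQuasiMultiplicative

end QuasiMultiplicative

section Partitions

variable {X ι : Type*} [PseudoEMetricSpace X] [MeasurableSpace X]
  {μ ν : Measure X} {C : ENNReal} {P : ι → Set X}

lemma measure_le_mul_measure_cthickening {s : Finset ι} {δ : ℝ} (K : Set X)
    (hmeas : ∀ i ∈ s, MeasurableSet (P i)) (hdisj : (s : Set ι).PairwiseDisjoint P)
    (hdiam : ∀ i ∈ s, ediam (P i) ≤ ENNReal.ofReal δ) (hcover : μ (⋃ i ∈ s, P i)ᶜ = 0)
    (hle : ∀ i ∈ s, μ (P i) ≤ C * ν (P i)) :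
    μ K ≤ C * ν (cthickening δ K) := by
  classical
  set T := {i ∈ s | (P i ∩ K).Nonempty}
  have hTs : T ⊆ s := Finset.filter_subset _ s
  have hKT : K ∩ ⋃ i ∈ s, P i ⊆ ⋃ i ∈ T, P i := by
    rintro x ⟨hxK, hx⟩
    obtain ⟨i, hi, hxi⟩ := Set.mem_iUnion₂.1 hx
    exact Set.mem_iUnion₂.2 ⟨i, Finset.mem_filter.2 ⟨hi, x, hxi, hxK⟩, hxi⟩
  have hTK : ⋃ i ∈ T, P i ⊆ cthickening δ K := by
    refine Set.iUnion₂_subset fun i hi x hx => ?_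
    obtain ⟨his, y, hyi, hyK⟩ := Finset.mem_filter.1 hi
    exact mem_cthickening_of_edist_le x y δ K hyK
      ((edist_le_ediam_of_mem hx hyi).trans (hdiam i his))
  calc μ K = μ (K ∩ ⋃ i ∈ s, P i) := (measure_inter_conull hcover).symm
    _ ≤ ∑ i ∈ T, μ (P i) := (measure_mono hKT).trans (measure_biUnion_finset_le T P)
    _ ≤ ∑ i ∈ T, C * ν (P i) := Finset.sum_le_sum fun i hi => hle i (hTs hi)
    _ = C * ν (⋃ i ∈ T, P i) := by
        rw [measure_biUnion_finset (hdisj.subset (Finset.coe_subset.2 hTs))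
          fun i hi => hmeas i (hTs hi), Finset.mul_sum]
    _ ≤ C * ν (cthickening δ K) := by gcongr

theorem measure_le_smul_of_forall_partition [BorelSpace X] [IsFiniteMeasure μ] [IsFiniteMeasure ν]
    (hC : C ≠ ⊤) {s : ℕ → Finset ι} {δ : ℕ → ℝ} (hδ : Tendsto δ atTop (nhds 0))
    (hmeas : ∀ n, ∀ i ∈ s n, MeasurableSet (P i))
    (hdisj : ∀ n, (s n : Set ι).PairwiseDisjoint P)
    (hdiam : ∀ n, ∀ i ∈ s n, ediam (P i) ≤ ENNReal.ofReal (δ n))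
    (hcover : ∀ᶠ n in atTop, μ (⋃ i ∈ s n, P i)ᶜ = 0)
    (hle : ∀ᶠ n in atTop, ∀ i ∈ s n, μ (P i) ≤ C * ν (P i)) :
    μ ≤ C • ν := by
  have hclosed : ∀ K, IsClosed K → μ K ≤ C * ν K := fun K hK => by
    have hlim : Tendsto (fun n => C * ν (cthickening (δ n) K)) atTop (nhds (C * ν K)) :=
      ENNReal.Tendsto.const_mul ((tendsto_measure_cthickening_of_isClosed
        ⟨1, one_pos, measure_ne_top _ _⟩ hK).comp hδ) (Or.inr hC)
    refine ge_of_tendsto hlim ?_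
    filter_upwards [hcover, hle] with n hn hle_n
    exact measure_le_mul_measure_cthickening K (hmeas n) (hdisj n) (hdiam n) hn hle_n
  refine Measure.le_iff.2 fun A hA => ?_
  rw [hA.measure_eq_iSup_isClosed_of_ne_top (measure_ne_top μ A), Measure.smul_apply, smul_eq_mul]
  refine iSup_le fun K => iSup_le fun hKA => iSup_le fun hK => ?_
  exact (hclosed K hK).trans (by gcongr)

lemma measureReal_le_mul_of_le_smul {Y : Type*} [MeasurableSpace Y] {μ ν : Measure Y}
    [IsFiniteMeasure ν] {C : ℝ} (hC : 0 ≤ C) (hle : μ ≤ ENNReal.ofReal C • ν) (A : Set Y) :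
    μ.real A ≤ C * ν.real A := by
  have h := ENNReal.toReal_mono
    (ENNReal.mul_ne_top ENNReal.ofReal_ne_top (measure_ne_top ν A)) (hle A)
  rwa [ENNReal.toReal_mul, ENNReal.toReal_ofReal hC] at h

end Partitions

lemma sum_range_inv_pow_succ_le {q : ℝ} (hq : 1 < q) (n : ℕ) :
    ∑ i ∈ Finset.range n, q⁻¹ ^ (i + 1) ≤ (q - 1)⁻¹ := by
  have hq0 : 0 < q := zero_lt_one.trans hq
  have hinv : 0 ≤ q⁻¹ := (inv_pos.2 hq0).le
  have hlt : q⁻¹ < 1 := inv_lt_one_of_one_lt₀ hq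
  calc ∑ i ∈ Finset.range n, q⁻¹ ^ (i + 1) = (∑ i ∈ Finset.range n, q⁻¹ ^ i) * q⁻¹ := by
        simp only [pow_succ, Finset.sum_mul]
    _ ≤ (∑' i : ℕ, q⁻¹ ^ i) * q⁻¹ := by
        gcongr
        exact (summable_geometric_of_lt_one hinv hlt).sum_le_tsum _ fun i _ => pow_nonneg hinv i
    _ = (q - 1)⁻¹ := by
        rw [tsum_geometric_of_lt_one hinv hlt, ← mul_inv, sub_mul, one_mul,
          inv_mul_cancel₀ hq0.ne']

namespace CookieCutter

variable {cc : CookieCutter}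

instance : NeZero cc.N := ⟨by have := cc.hN; omega⟩

section Coding

variable {x y : ℝ}

lemma φ_mem_Icc (j : Fin cc.N) (hx : x ∈ Set.Icc (0 : ℝ) 1) : cc.φ j x ∈ Set.Icc (0 : ℝ) 1 :=
  cc.hJsub_sub j (cc.hφ_maps j x hx)

lemma φ_inj {i j : Fin cc.N} (hx : x ∈ Set.Icc (0 : ℝ) 1) (hy : y ∈ Set.Icc (0 : ℝ) 1)
    (h : cc.φ i x = cc.φ j y) : i = j ∧ x = y := by
  obtain rfl : i = j := by
    by_contra hij
    exact Set.disjoint_left.1 (cc.hJsub_disj i j hij) (cc.hφ_maps i x hx)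
      (h ▸ cc.hφ_maps j y hy)
  exact ⟨rfl, by rw [← cc.hφ_rinv i x hx, h, cc.hφ_rinv i y hy]⟩

lemma wordMap_mem_Icc (σ : List (Fin cc.N)) (hx : x ∈ Set.Icc (0 : ℝ) 1) :
    cc.wordMap σ x ∈ Set.Icc (0 : ℝ) 1 := by
  induction σ with
  | nil => exact hx
  | cons j σ ih => exact φ_mem_Icc j ih

lemma wordMap_append (σ τ : List (Fin cc.N)) :
    cc.wordMap (σ ++ τ) = cc.wordMap σ ∘ cc.wordMap τ := by
  induction σ with
  | nil => rfl
  | cons j σ ih => exact congrArg (cc.φ j ∘ ·) ih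

lemma injOn_wordMap (σ : List (Fin cc.N)) : Set.InjOn (cc.wordMap σ) (Set.Icc 0 1) := by
  induction σ with
  | nil => exact Set.injOn_id _
  | cons j σ ih =>
    intro x hx y hy h
    exact ih hx hy (φ_inj (wordMap_mem_Icc σ hx) (wordMap_mem_Icc σ hy) h).2

lemma prefix_or_prefix_of_wordMap_eq {σ τ : List (Fin cc.N)} (hx : x ∈ Set.Icc (0 : ℝ) 1)
    (hy : y ∈ Set.Icc (0 : ℝ) 1) (h : cc.wordMap σ x = cc.wordMap τ y) :
    σ <+: τ ∨ τ <+: σ := by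
  induction σ generalizing τ with
  | nil => exact Or.inl List.nil_prefix
  | cons i σ ih =>
    cases τ with
    | nil => exact Or.inr List.nil_prefix
    | cons j τ =>
      obtain ⟨rfl, htail⟩ := φ_inj (wordMap_mem_Icc σ hx) (wordMap_mem_Icc τ hy) h
      simpa only [List.cons_prefix_cons, true_and] using ih htail

lemma Jc_nil : cc.Jc [] = Set.Icc 0 1 := Set.image_id _

lemma Jc_subset_Icc (σ : List (Fin cc.N)) : cc.Jc σ ⊆ Set.Icc 0 1 :=
  Set.image_subset_iff.2 fun _ hx => wordMap_mem_Icc σ hx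

lemma Jc_append (σ τ : List (Fin cc.N)) : cc.Jc (σ ++ τ) = cc.wordMap σ '' cc.Jc τ := by
  rw [Jc, wordMap_append, Set.image_comp, Jc]

lemma preimage_Jc_append_inter_Icc (σ τ : List (Fin cc.N)) :
    cc.wordMap σ ⁻¹' cc.Jc (σ ++ τ) ∩ Set.Icc 0 1 = cc.Jc τ := by
  rw [Jc_append]
  exact (injOn_wordMap σ).preimage_image_inter (Jc_subset_Icc τ)

lemma disjoint_Jc {σ τ : List (Fin cc.N)} (hστ : ¬σ <+: τ) (hτσ : ¬τ <+: σ) :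
    Disjoint (cc.Jc σ) (cc.Jc τ) := by
  refine Set.disjoint_left.2 ?_
  rintro _ ⟨x, hx, rfl⟩ ⟨y, hy, h⟩
  exact (prefix_or_prefix_of_wordMap_eq hx hy h.symm).elim hστ hτσ

lemma pairwiseDisjoint_Jc {Γ : Set (List (Fin cc.N))} (hΓ : IsAntichain (· <+: ·) Γ) :
    Γ.PairwiseDisjoint cc.Jc := fun _ hσ _ hτ hne =>
  disjoint_Jc (hΓ hσ hτ hne) (hΓ hτ hσ hne.symm)

end Coding

section Distortion

variable {x y : ℝ}

lemma differentiableAt_wordMap (σ : List (Fin cc.N)) (hx : x ∈ Set.Icc (0 : ℝ) 1) :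
    DifferentiableAt ℝ (cc.wordMap σ) x := by
  induction σ with
  | nil => exact differentiableAt_id
  | cons j σ ih => exact (cc.hφdiff j _ (wordMap_mem_Icc σ hx)).comp x ih

lemma continuousOn_wordMap (σ : List (Fin cc.N)) :
    ContinuousOn (cc.wordMap σ) (Set.Icc 0 1) := fun _ hx =>
  (differentiableAt_wordMap σ hx).continuousAt.continuousWithinAt

lemma measurableSet_Jc (σ : List (Fin cc.N)) : MeasurableSet (cc.Jc σ) :=
  (isCompact_Icc.image_of_continuousOn (continuousOn_wordMap σ)).measurableSet

lemma deriv_wordMap_append (σ τ : List (Fin cc.N)) (hx : x ∈ Set.Icc (0 : ℝ) 1) :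
    deriv (cc.wordMap (σ ++ τ)) x =
      deriv (cc.wordMap σ) (cc.wordMap τ x) * deriv (cc.wordMap τ) x := by
  rw [wordMap_append]
  exact deriv_comp x (differentiableAt_wordMap σ (wordMap_mem_Icc τ hx))
    (differentiableAt_wordMap τ hx)

lemma deriv_wordMap_cons (j : Fin cc.N) (σ : List (Fin cc.N)) (hx : x ∈ Set.Icc (0 : ℝ) 1) :
    deriv (cc.wordMap (j :: σ)) x =
      deriv (cc.φ j) (cc.wordMap σ x) * deriv (cc.wordMap σ) x :=
  deriv_wordMap_append [j] σ hx

lemma deriv_f_mul_deriv_φ (j : Fin cc.N) (hx : x ∈ Set.Icc (0 : ℝ) 1) :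
    deriv cc.f (cc.φ j x) * deriv (cc.φ j) x = 1 := by
  have hcomp : HasDerivAt (cc.f ∘ cc.φ j) (deriv cc.f (cc.φ j x) * deriv (cc.φ j) x) x :=
    (cc.hfdiff j _ (cc.hφ_maps j x hx)).hasDerivAt.comp x (cc.hφdiff j x hx).hasDerivAt
  have hid : HasDerivWithinAt (cc.f ∘ cc.φ j) 1 (Set.Icc 0 1) x :=
    (hasDerivWithinAt_id x _).congr (cc.hφ_rinv j) (cc.hφ_rinv j x hx)
  exact (uniqueDiffOn_Icc (zero_lt_one' ℝ) x hx).eq_deriv _ hcomp.hasDerivWithinAt hid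

lemma b_pos : 0 < cc.b := zero_lt_one.trans cc.hb1

lemma one_lt_b_rpow_γ : 1 < cc.b ^ cc.γ := Real.one_lt_rpow cc.hb1 cc.hγ.1

lemma b_le_abs_deriv_f {j : Fin cc.N} (hx : x ∈ cc.Jsub j) : cc.b ≤ |deriv cc.f x| :=
  cc.hb.1 ⟨x, Set.mem_iUnion.2 ⟨j, hx⟩, rfl⟩

lemma abs_deriv_φ (j : Fin cc.N) (hx : x ∈ Set.Icc (0 : ℝ) 1) :
    |deriv (cc.φ j) x| = |deriv cc.f (cc.φ j x)|⁻¹ := by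
  rw [← abs_inv, ← eq_inv_of_mul_eq_one_right (deriv_f_mul_deriv_φ j hx)]

lemma abs_deriv_φ_le (j : Fin cc.N) (hx : x ∈ Set.Icc (0 : ℝ) 1) :
    |deriv (cc.φ j) x| ≤ cc.b⁻¹ := by
  rw [abs_deriv_φ j hx]
  exact inv_anti₀ b_pos (b_le_abs_deriv_f (cc.hφ_maps j x hx))

lemma abs_deriv_wordMap_le (σ : List (Fin cc.N)) (hx : x ∈ Set.Icc (0 : ℝ) 1) :
    |deriv (cc.wordMap σ) x| ≤ cc.b⁻¹ ^ σ.length := by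
  induction σ with
  | nil => simp [wordMap]
  | cons j σ ih =>
    rw [deriv_wordMap_cons j σ hx, abs_mul, List.length_cons, pow_succ']
    exact mul_le_mul (abs_deriv_φ_le j (wordMap_mem_Icc σ hx)) ih (abs_nonneg _)
      (inv_pos.2 b_pos).le

lemma deriv_wordMap_ne_zero (σ : List (Fin cc.N)) (hx : x ∈ Set.Icc (0 : ℝ) 1) :
    deriv (cc.wordMap σ) x ≠ 0 := by
  induction σ with
  | nil => simp [wordMap]
  | cons j σ ih =>
    have hφ := right_ne_zero_of_mul_eq_one (deriv_f_mul_deriv_φ j (wordMap_mem_Icc σ hx))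
    rw [deriv_wordMap_cons j σ hx]
    exact mul_ne_zero hφ ih

lemma abs_wordMap_sub_le {σ : List (Fin cc.N)} {C : ℝ}
    (hC : ∀ z ∈ Set.Icc (0 : ℝ) 1, |deriv (cc.wordMap σ) z| ≤ C)
    (hx : x ∈ Set.Icc (0 : ℝ) 1) (hy : y ∈ Set.Icc (0 : ℝ) 1) :
    |cc.wordMap σ x - cc.wordMap σ y| ≤ C := by
  have hmvt : |cc.wordMap σ x - cc.wordMap σ y| ≤ C * |x - y| :=
    (convex_Icc (0 : ℝ) 1).norm_image_sub_le_of_norm_deriv_le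
      (fun _ hz => differentiableAt_wordMap σ hz) hC hy hx
  have hxy : |x - y| ≤ 1 := by
    rw [abs_le]
    constructor <;> linarith [hx.1, hx.2, hy.1, hy.2]
  exact hmvt.trans (mul_le_of_le_one_right ((abs_nonneg _).trans (hC x hx)) hxy)

lemma abs_wordMap_sub_le_pow (σ : List (Fin cc.N)) (hx : x ∈ Set.Icc (0 : ℝ) 1)
    (hy : y ∈ Set.Icc (0 : ℝ) 1) :
    |cc.wordMap σ x - cc.wordMap σ y| ≤ cc.b⁻¹ ^ σ.length :=
  abs_wordMap_sub_le (fun _ hz => abs_deriv_wordMap_le σ hz) hx hy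

lemma ediam_Jc_le (σ : List (Fin cc.N)) :
    ediam (cc.Jc σ) ≤ ENNReal.ofReal (cc.b⁻¹ ^ σ.length) := by
  refine ediam_le ?_
  rintro _ ⟨x, hx, rfl⟩ _ ⟨y, hy, rfl⟩
  rw [edist_dist, Real.dist_eq]
  exact ENNReal.ofReal_le_ofReal (abs_wordMap_sub_le_pow σ hx hy)

lemma abs_deriv_φ_le_exp_mul (j : Fin cc.N) (hx : x ∈ Set.Icc (0 : ℝ) 1)
    (hy : y ∈ Set.Icc (0 : ℝ) 1) :
    |deriv (cc.φ j) x| ≤ Real.exp (cc.c * |cc.φ j x - cc.φ j y| ^ cc.γ) * |deriv (cc.φ j) y| := by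
  have hu := cc.hφ_maps j x hx
  have hv := cc.hφ_maps j y hy
  have hfu := b_le_abs_deriv_f hu
  have hfv := b_pos.trans_le (b_le_abs_deriv_f hv)
  have hHolder := cc.hHolder j _ hv _ hu
  rw [abs_deriv_φ j hx, abs_deriv_φ j hy]
  rw [abs_sub_comm (cc.φ j y)] at hHolder
  set t := cc.c * |cc.φ j x - cc.φ j y| ^ cc.γ
  have ht : 0 ≤ t := (abs_nonneg _).trans hHolder
  rw [inv_le_iff_one_le_mul₀' (b_pos.trans_le hfu), ← mul_assoc, le_mul_inv_iff₀ hfv, one_mul]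
  calc |deriv cc.f (cc.φ j y)| ≤ |deriv cc.f (cc.φ j x)| + t := by
        linarith [abs_sub_abs_le_abs_sub (deriv cc.f (cc.φ j y)) (deriv cc.f (cc.φ j x))]
    _ ≤ |deriv cc.f (cc.φ j x)| * (t + 1) := by
        have := le_mul_of_one_le_left ht (cc.hb1.le.trans hfu)
        linarith
    _ ≤ |deriv cc.f (cc.φ j x)| * Real.exp t := by
        gcongr
        exact Real.add_one_le_exp t

lemma abs_deriv_wordMap_le_exp_sum_mul (σ : List (Fin cc.N)) (hx : x ∈ Set.Icc (0 : ℝ) 1)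
    (hy : y ∈ Set.Icc (0 : ℝ) 1) :
    |deriv (cc.wordMap σ) x| ≤
      Real.exp (cc.c * ∑ i ∈ Finset.range σ.length, (cc.b ^ cc.γ)⁻¹ ^ (i + 1)) *
        |deriv (cc.wordMap σ) y| := by
  induction σ with
  | nil => simp [wordMap]
  | cons j σ ih =>
    have hdist : |cc.wordMap (j :: σ) x - cc.wordMap (j :: σ) y| ^ cc.γ ≤
        (cc.b ^ cc.γ)⁻¹ ^ (σ.length + 1) := by
      rw [← Real.inv_rpow b_pos.le, Real.rpow_pow_comm (inv_pos.2 b_pos).le]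
      exact Real.rpow_le_rpow (abs_nonneg _) (abs_wordMap_sub_le_pow (j :: σ) hx hy) cc.hγ.1.le
    have hhead : |deriv (cc.φ j) (cc.wordMap σ x)| ≤
        Real.exp (cc.c * (cc.b ^ cc.γ)⁻¹ ^ (σ.length + 1)) *
          |deriv (cc.φ j) (cc.wordMap σ y)| := by
      refine (abs_deriv_φ_le_exp_mul j (wordMap_mem_Icc σ hx) (wordMap_mem_Icc σ hy)).trans ?_
      gcongr
      exacts [cc.hc.le, hdist]
    rw [deriv_wordMap_cons j σ hx, deriv_wordMap_cons j σ hy, abs_mul, abs_mul,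
      List.length_cons, Finset.sum_range_succ, mul_add, Real.exp_add]
    refine (mul_le_mul hhead ih (abs_nonneg _) (by positivity)).trans_eq ?_
    ring

lemma one_le_xi : 1 ≤ cc.xi :=
  Real.one_le_exp (div_nonneg cc.hc.le (sub_nonneg.2 one_lt_b_rpow_γ.le))

lemma xi_pos : 0 < cc.xi := Real.exp_pos _

lemma abs_deriv_wordMap_le_xi_mul (σ : List (Fin cc.N)) (hx : x ∈ Set.Icc (0 : ℝ) 1)
    (hy : y ∈ Set.Icc (0 : ℝ) 1) :
    |deriv (cc.wordMap σ) x| ≤ cc.xi * |deriv (cc.wordMap σ) y| := by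
  refine (abs_deriv_wordMap_le_exp_sum_mul σ hx hy).trans ?_
  rw [xi, div_eq_mul_inv]
  gcongr
  exacts [cc.hc.le, sum_range_inv_pow_succ_le one_lt_b_rpow_γ _]

lemma abs_deriv_wordMap_le_φnorm (σ : List (Fin cc.N)) (hx : x ∈ Set.Icc (0 : ℝ) 1) :
    |deriv (cc.wordMap σ) x| ≤ cc.φnorm σ :=
  le_csSup ⟨cc.b⁻¹ ^ σ.length, Set.forall_mem_image.2 fun _ hy => abs_deriv_wordMap_le σ hy⟩
    ⟨x, hx, rfl⟩

lemma φnorm_le {σ : List (Fin cc.N)} {C : ℝ}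
    (hC : ∀ x ∈ Set.Icc (0 : ℝ) 1, |deriv (cc.wordMap σ) x| ≤ C) : cc.φnorm σ ≤ C :=
  csSup_le ((Set.nonempty_Icc.2 zero_le_one).image _) (Set.forall_mem_image.2 hC)

lemma φnorm_le_xi_mul (σ : List (Fin cc.N)) (hx : x ∈ Set.Icc (0 : ℝ) 1) :
    cc.φnorm σ ≤ cc.xi * |deriv (cc.wordMap σ) x| :=
  φnorm_le fun _ hy => abs_deriv_wordMap_le_xi_mul σ hy hx

lemma φnorm_pos (σ : List (Fin cc.N)) : 0 < cc.φnorm σ :=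
  have h0 : (0 : ℝ) ∈ Set.Icc (0 : ℝ) 1 := Set.left_mem_Icc.2 zero_le_one
  (abs_pos.2 (deriv_wordMap_ne_zero σ h0)).trans_le (abs_deriv_wordMap_le_φnorm σ h0)

theorem isQuasiMultiplicative_φnorm : IsQuasiMultiplicative cc.φnorm cc.xi where
  pos := φnorm_pos
  append_le σ τ := by
    have hsub : cc.φnorm (σ ++ τ) ≤ cc.φnorm σ * cc.φnorm τ := by
      refine φnorm_le fun x hx => ?_
      rw [deriv_wordMap_append σ τ hx, abs_mul]
      exact mul_le_mul (abs_deriv_wordMap_le_φnorm σ (wordMap_mem_Icc τ hx))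
        (abs_deriv_wordMap_le_φnorm τ hx) (abs_nonneg _) (φnorm_pos σ).le
    exact hsub.trans (le_mul_of_one_le_left (mul_pos (φnorm_pos σ) (φnorm_pos τ)).le one_le_xi)
  mul_le σ τ := by
    rw [mul_comm, ← le_div_iff₀ (φnorm_pos σ)]
    refine φnorm_le fun x hx => ?_
    rw [le_div_iff₀ (φnorm_pos σ)]
    calc |deriv (cc.wordMap τ) x| * cc.φnorm σ
        ≤ |deriv (cc.wordMap τ) x| * (cc.xi * |deriv (cc.wordMap σ) (cc.wordMap τ x)|) := by
          gcongr
          exact φnorm_le_xi_mul σ (wordMap_mem_Icc τ hx)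
      _ = cc.xi * |deriv (cc.wordMap (σ ++ τ)) x| := by
          rw [deriv_wordMap_append σ τ hx, abs_mul]
          ring
      _ ≤ cc.xi * cc.φnorm (σ ++ τ) :=
          mul_le_mul_of_nonneg_left (abs_deriv_wordMap_le_φnorm _ hx) xi_pos.le

lemma diamJ_le_φnorm (σ : List (Fin cc.N)) : cc.diamJ σ ≤ cc.φnorm σ := by
  refine diam_le_of_forall_dist_le (φnorm_pos σ).le ?_
  rintro _ ⟨x, hx, rfl⟩ _ ⟨y, hy, rfl⟩
  exact abs_wordMap_sub_le (fun _ hz => abs_deriv_wordMap_le_φnorm σ hz) hx hy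

lemma φnorm_le_xi_mul_diamJ (σ : List (Fin cc.N)) : cc.φnorm σ ≤ cc.xi * cc.diamJ σ := by
  obtain ⟨z, hz, hslope⟩ := exists_deriv_eq_slope (cc.wordMap σ) (zero_lt_one' ℝ)
    (continuousOn_wordMap σ) fun x hx =>
      (differentiableAt_wordMap σ (Set.Ioo_subset_Icc_self hx)).differentiableWithinAt
  have hdiam : |deriv (cc.wordMap σ) z| ≤ cc.diamJ σ := by
    rw [hslope, sub_zero, div_one]
    exact dist_le_diam_of_mem ((isBounded_Icc 0 1).subset (Jc_subset_Icc σ))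
      (Set.mem_image_of_mem _ (Set.right_mem_Icc.2 zero_le_one))
      (Set.mem_image_of_mem _ (Set.left_mem_Icc.2 zero_le_one))
  exact (φnorm_le_xi_mul σ (Set.Ioo_subset_Icc_self hz)).trans
    (mul_le_mul_of_nonneg_left hdiam xi_pos.le)

lemma diamJ_nil : cc.diamJ [] = 1 := by
  rw [diamJ, Jc_nil, Real.diam_Icc zero_le_one, sub_zero]

end Distortion

section Gibbs

variable {μ : Measure ℝ} {h : ℝ}

lemma one_le_eta (hh : 0 ≤ h) : 1 ≤ cc.eta h :=
  Real.one_le_rpow one_le_xi (by positivity)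

lemma eta_pos : 0 < cc.eta h := Real.rpow_pos_of_pos xi_pos _

lemma Lconst_pos : 0 < cc.Lconst h :=
  mul_pos (pow_pos eta_pos 3) (Real.rpow_pos_of_pos xi_pos _)

namespace IsGibbsLike

lemma measure_compl_iUnion_Jc_of_ne_zero (hμ : cc.IsGibbsLike μ h) {n : ℕ} (hn : n ≠ 0) :
    μ (⋃ w ∈ wordsOfLength (Fin cc.N) n, cc.Jc w)ᶜ = 0 := by
  refine measure_mono_null (Set.compl_subset_compl.2 fun x hx => ?_) hμ.2.1
  obtain ⟨σ, hσ⟩ := Set.mem_iUnion.1 (Set.mem_iInter₂.1 hx n (Nat.one_le_iff_ne_zero.2 hn))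
  exact Set.mem_iUnion₂.2 ⟨_, mem_wordsOfLength.2 List.length_ofFn, hσ⟩

lemma measure_compl_Icc (hμ : cc.IsGibbsLike μ h) : μ (Set.Icc 0 1)ᶜ = 0 :=
  measure_mono_null (Set.compl_subset_compl.2 (Set.iUnion₂_subset fun w _ => Jc_subset_Icc w))
    (hμ.measure_compl_iUnion_Jc_of_ne_zero one_ne_zero)

lemma measure_compl_iUnion_Jc (hμ : cc.IsGibbsLike μ h) (n : ℕ) :
    μ (⋃ w ∈ wordsOfLength (Fin cc.N) n, cc.Jc w)ᶜ = 0 := by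
  obtain rfl | hn := eq_or_ne n 0
  · refine measure_mono_null (Set.compl_subset_compl.2 ?_) hμ.measure_compl_Icc
    rw [← Jc_nil]
    exact Set.subset_biUnion_of_mem (u := cc.Jc) (mem_wordsOfLength.2 List.length_nil)
  · exact hμ.measure_compl_iUnion_Jc_of_ne_zero hn

lemma measure_inter_Icc (hμ : cc.IsGibbsLike μ h) (A : Set ℝ) : μ (A ∩ Set.Icc 0 1) = μ A :=
  measure_inter_conull hμ.measure_compl_Icc

lemma real_Jc_nil (hμ : cc.IsGibbsLike μ h) : μ.real (cc.Jc []) = 1 := by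
  have := hμ.1
  rw [Jc_nil, measureReal_def, (prob_compl_eq_zero_iff measurableSet_Icc).1 hμ.measure_compl_Icc,
    ENNReal.toReal_one]

lemma real_Jc_le (hμ : cc.IsGibbsLike μ h) (hh : 0 ≤ h) (σ : List (Fin cc.N)) :
    μ.real (cc.Jc σ) ≤ cc.eta h * cc.diamJ σ ^ h := by
  obtain rfl | hσ := eq_or_ne σ []
  · rw [hμ.real_Jc_nil, diamJ_nil, Real.one_rpow, mul_one]
    exact one_le_eta hh
  · exact (hμ.2.2 σ hσ).2

lemma diamJ_rpow_le (hμ : cc.IsGibbsLike μ h) (hh : 0 ≤ h) (σ : List (Fin cc.N)) :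
    cc.diamJ σ ^ h ≤ cc.eta h * μ.real (cc.Jc σ) := by
  obtain rfl | hσ := eq_or_ne σ []
  · rw [hμ.real_Jc_nil, diamJ_nil, Real.one_rpow, mul_one]
    exact one_le_eta hh
  · exact (inv_mul_le_iff₀ eta_pos).1 (hμ.2.2 σ hσ).1

lemma real_Jc_le_φnorm_rpow (hμ : cc.IsGibbsLike μ h) (hh : 0 ≤ h) (σ : List (Fin cc.N)) :
    μ.real (cc.Jc σ) ≤ cc.eta h * cc.φnorm σ ^ h :=
  (hμ.real_Jc_le hh σ).trans <|
    mul_le_mul_of_nonneg_left (Real.rpow_le_rpow diam_nonneg (diamJ_le_φnorm σ) hh) eta_pos.le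

lemma φnorm_rpow_le (hμ : cc.IsGibbsLike μ h) (hh : 0 ≤ h) (σ : List (Fin cc.N)) :
    cc.φnorm σ ^ h ≤ cc.eta h * cc.xi ^ h * μ.real (cc.Jc σ) :=
  calc cc.φnorm σ ^ h ≤ (cc.xi * cc.diamJ σ) ^ h :=
        Real.rpow_le_rpow (φnorm_pos σ).le (φnorm_le_xi_mul_diamJ σ) hh
    _ = cc.xi ^ h * cc.diamJ σ ^ h := Real.mul_rpow xi_pos.le diam_nonneg
    _ ≤ cc.xi ^ h * (cc.eta h * μ.real (cc.Jc σ)) :=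
        mul_le_mul_of_nonneg_left (hμ.diamJ_rpow_le hh σ) (Real.rpow_nonneg xi_pos.le h)
    _ = cc.eta h * cc.xi ^ h * μ.real (cc.Jc σ) := by ring

theorem isQuasiMultiplicative_real_Jc (hμ : cc.IsGibbsLike μ h) (hh : 0 ≤ h) :
    IsQuasiMultiplicative (fun σ => μ.real (cc.Jc σ)) (cc.Lconst h) := by
  have hconst : cc.eta h * (cc.eta h * cc.xi ^ h) ^ 2 * cc.xi ^ h = cc.Lconst h := by
    rw [Lconst, mul_comm 3 h, Real.rpow_mul xi_pos.le, Real.rpow_ofNat]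
    ring
  rw [← hconst]
  exact (isQuasiMultiplicative_φnorm.rpow hh).of_comparable eta_pos.le
    (le_mul_of_one_le_right eta_pos.le (Real.one_le_rpow one_le_xi hh))
    (hμ.real_Jc_le_φnorm_rpow hh) (hμ.φnorm_rpow_le hh)

lemma isQuasiMultiplicative_weight (hμ : cc.IsGibbsLike μ h) (hh : 0 ≤ h) {r s : ℝ}
    (hr : 0 ≤ r) (hs : 0 ≤ s) :
    IsQuasiMultiplicative (fun σ => (μ.real (cc.Jc σ) * cc.φnorm σ ^ r) ^ s)
      ((cc.Lconst h * cc.xi ^ r) ^ s) :=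
  ((hμ.isQuasiMultiplicative_real_Jc hh).mul (isQuasiMultiplicative_φnorm.rpow hr)).rpow hs

end IsGibbsLike

end Gibbs

lemma measure_le_smul_of_forall_Jc {μ ν : Measure ℝ} [IsFiniteMeasure μ] [IsFiniteMeasure ν]
    {C : ℝ} {n₀ : ℕ} (hC : 0 ≤ C)
    (hcover : ∀ n ≥ n₀, μ (⋃ w ∈ wordsOfLength (Fin cc.N) n, cc.Jc w)ᶜ = 0)
    (hle : ∀ w : List (Fin cc.N), n₀ ≤ w.length → μ.real (cc.Jc w) ≤ C * ν.real (cc.Jc w)) :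
    μ ≤ ENNReal.ofReal C • ν := by
  have hδ : Tendsto (fun n : ℕ => cc.b⁻¹ ^ n) atTop (nhds 0) :=
    tendsto_pow_atTop_nhds_zero_of_lt_one (inv_pos.2 b_pos).le (inv_lt_one_of_one_lt₀ cc.hb1)
  refine measure_le_smul_of_forall_partition ENNReal.ofReal_ne_top
    (s := wordsOfLength (Fin cc.N)) hδ (fun _ w _ => measurableSet_Jc w)
    (fun n => pairwiseDisjoint_Jc (isPrefixCut_wordsOfLength n).antichain)
    (fun n w hw => mem_wordsOfLength.1 hw ▸ ediam_Jc_le w)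
    (eventually_atTop.2 ⟨n₀, hcover⟩) (eventually_atTop.2 ⟨n₀, fun n hn w hw => ?_⟩)
  rw [← ofReal_measureReal, ← ofReal_measureReal, ← ENNReal.ofReal_mul hC]
  exact ENNReal.ofReal_le_ofReal (hle w ((mem_wordsOfLength.1 hw).symm ▸ hn))

section Antichain

variable {Γ : Finset (List (Fin cc.N))} {μ : Measure ℝ} {h : ℝ} {n : ℕ}

lemma IsFMA.isPrefixCut (hΓ : cc.IsFMA Γ) : IsPrefixCut Γ (Γ.sup List.length) where
  antichain σ hσ τ hτ hne hpre := hne (hΓ.2.2 σ hσ τ hτ hpre)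
  length_le _ hσ := Finset.le_sup (f := List.length) hσ
  exists_prefix w hw := by
    obtain ⟨k, -, hk⟩ := hΓ.2.1 fun i => w.getD i 0
    have hkw : k ≤ w.length := by
      simpa only [List.length_ofFn] using (Finset.le_sup (f := List.length) hk).trans hw
    have htake : (List.ofFn fun i : Fin k => w.getD i 0) = w.take k := by
      refine List.ext_getElem (by simp [hkw]) fun i hi _ => ?_
      have hiw : i < w.length := (List.length_ofFn ▸ hi).trans_le hkw
      simp [hiw]
    exact ⟨_, hk, htake ▸ List.take_prefix k w⟩

/-- The measure `∑ σ ∈ Γ, μ(J_σ) (μ ∘ φ_σ⁻¹)`. As `φ_σ` is only controlled on `[0, 1]`, the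
pushforwards are meaningful (not the junk value `0`) only for `μ` carried by `[0, 1]`. -/
def antichainMeasure (Γ : Finset (List (Fin cc.N))) (μ : Measure ℝ) : Measure ℝ :=
  ∑ σ ∈ Γ, μ (cc.Jc σ) • μ.map (cc.wordMap σ)

namespace IsGibbsLike

lemma aemeasurable_wordMap (hμ : cc.IsGibbsLike μ h) (σ : List (Fin cc.N)) :
    AEMeasurable (cc.wordMap σ) μ := by
  have hrestrict := (continuousOn_wordMap σ).aemeasurable (μ := μ) measurableSet_Icc
  rwa [Measure.restrict_eq_self_of_ae_mem (s := Set.Icc 0 1)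
    (mem_ae_iff.2 hμ.measure_compl_Icc)] at hrestrict

lemma antichainMeasure_apply (hμ : cc.IsGibbsLike μ h) {A : Set ℝ} (hA : MeasurableSet A) :
    antichainMeasure Γ μ A = ∑ σ ∈ Γ, μ (cc.Jc σ) * μ (cc.wordMap σ ⁻¹' A) := by
  simp only [antichainMeasure, Measure.finsetSum_apply, Measure.smul_apply, smul_eq_mul,
    Measure.map_apply_of_aemeasurable (hμ.aemeasurable_wordMap _) hA]

lemma real_antichainMeasure_apply (hμ : cc.IsGibbsLike μ h) {A : Set ℝ} (hA : MeasurableSet A) :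
    (antichainMeasure Γ μ).real A =
      ∑ σ ∈ Γ, μ.real (cc.Jc σ) * μ.real (cc.wordMap σ ⁻¹' A) := by
  have := hμ.1
  rw [measureReal_def, hμ.antichainMeasure_apply hA, ENNReal.toReal_sum fun σ _ =>
    ENNReal.mul_ne_top (measure_ne_top _ _) (measure_ne_top _ _)]
  simp only [ENNReal.toReal_mul, measureReal_def]

lemma isFiniteMeasure_antichainMeasure (hμ : cc.IsGibbsLike μ h) :
    IsFiniteMeasure (antichainMeasure Γ μ) := by
  have := hμ.1
  constructor
  rw [hμ.antichainMeasure_apply MeasurableSet.univ]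
  exact ENNReal.sum_lt_top.2 fun σ _ =>
    ENNReal.mul_lt_top (measure_lt_top _ _) (measure_lt_top _ _)

lemma antichainMeasure_Jc_append (hμ : cc.IsGibbsLike μ h)
    (hΓ : IsAntichain (· <+: ·) (Γ : Set (List (Fin cc.N)))) {σ : List (Fin cc.N)} (hσ : σ ∈ Γ)
    (τ : List (Fin cc.N)) :
    antichainMeasure Γ μ (cc.Jc (σ ++ τ)) = μ (cc.Jc σ) * μ (cc.Jc τ) := by
  rw [hμ.antichainMeasure_apply (measurableSet_Jc _), Finset.sum_eq_single_of_mem σ hσ,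
    ← hμ.measure_inter_Icc (cc.wordMap σ ⁻¹' _), preimage_Jc_append_inter_Icc]
  intro σ' hσ' hne
  have hempty : cc.wordMap σ' ⁻¹' cc.Jc (σ ++ τ) ∩ Set.Icc 0 1 = ∅ := by
    refine Set.eq_empty_of_forall_notMem fun x ⟨hx, hx01⟩ => ?_
    refine (pairwiseDisjoint_Jc hΓ hσ' hσ hne).le_bot ⟨⟨x, hx01, rfl⟩, ?_⟩
    rw [Set.mem_preimage, Jc_append] at hx
    exact Set.image_mono (Jc_subset_Icc τ) hx
  rw [← hμ.measure_inter_Icc (cc.wordMap σ' ⁻¹' _), hempty, measure_empty, mul_zero]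

lemma real_antichainMeasure_Jc_append (hμ : cc.IsGibbsLike μ h)
    (hΓ : IsAntichain (· <+: ·) (Γ : Set (List (Fin cc.N)))) {σ : List (Fin cc.N)} (hσ : σ ∈ Γ)
    (τ : List (Fin cc.N)) :
    (antichainMeasure Γ μ).real (cc.Jc (σ ++ τ)) = μ.real (cc.Jc σ) * μ.real (cc.Jc τ) := by
  rw [measureReal_def, hμ.antichainMeasure_Jc_append hΓ hσ, ENNReal.toReal_mul]
  rfl

lemma antichainMeasure_compl_iUnion_Jc (hμ : cc.IsGibbsLike μ h)
    (hlen : ∀ σ ∈ Γ, σ.length ≤ n) :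
    antichainMeasure Γ μ (⋃ w ∈ wordsOfLength (Fin cc.N) n, cc.Jc w)ᶜ = 0 := by
  rw [hμ.antichainMeasure_apply
    (Finset.measurableSet_biUnion _ fun w _ => measurableSet_Jc w).compl]
  refine Finset.sum_eq_zero fun σ hσ => mul_eq_zero_of_right _ ?_
  refine measure_mono_null (Set.compl_subset_compl.2 ?_)
    (hμ.measure_compl_iUnion_Jc (n - σ.length))
  refine Set.iUnion₂_subset fun τ hτ x hx => Set.mem_iUnion₂.2 ⟨σ ++ τ, ?_, ?_⟩
  · rw [mem_wordsOfLength, List.length_append, mem_wordsOfLength.1 hτ,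
      Nat.add_sub_cancel' (hlen σ hσ)]
  · rw [Jc_append]
    exact Set.mem_image_of_mem _ hx

theorem antichainMeasure_le_smul (hμ : cc.IsGibbsLike μ h) (hh : 0 ≤ h) (hΓ : IsPrefixCut Γ n) :
    antichainMeasure Γ μ ≤ ENNReal.ofReal (cc.Lconst h) • μ := by
  have := hμ.1
  have := hμ.isFiniteMeasure_antichainMeasure (Γ := Γ)
  refine measure_le_smul_of_forall_Jc (n₀ := n) Lconst_pos.le
    (fun m hm => hμ.antichainMeasure_compl_iUnion_Jc (hΓ.mono hm).length_le) fun w hw => ?_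
  obtain ⟨σ, hσ, τ, rfl⟩ := hΓ.exists_prefix w hw
  rw [hμ.real_antichainMeasure_Jc_append hΓ.antichain hσ]
  exact (hμ.isQuasiMultiplicative_real_Jc hh).mul_le σ τ

theorem le_smul_antichainMeasure (hμ : cc.IsGibbsLike μ h) (hh : 0 ≤ h) (hΓ : IsPrefixCut Γ n) :
    μ ≤ ENNReal.ofReal (cc.Lconst h) • antichainMeasure Γ μ := by
  have := hμ.1
  have := hμ.isFiniteMeasure_antichainMeasure (Γ := Γ)
  refine measure_le_smul_of_forall_Jc (n₀ := n) Lconst_pos.le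
    (fun m _ => hμ.measure_compl_iUnion_Jc m) fun w hw => ?_
  obtain ⟨σ, hσ, τ, rfl⟩ := hΓ.exists_prefix w hw
  rw [hμ.real_antichainMeasure_Jc_append hΓ.antichain hσ]
  exact (hμ.isQuasiMultiplicative_real_Jc hh).append_le σ τ

end IsGibbsLike

end Antichain

end CookieCutter

theorem antichain_bounds (cc : CookieCutter) (Q : ℝ → ℝ)
    (hQ : ∀ t : ℝ, Filter.Tendsto
      (fun k : ℕ => (1 / (k : ℝ)) * Real.log
        (∑ σ : Fin k → Fin cc.N, cc.φnorm (List.ofFn σ) ^ t))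
      Filter.atTop (nhds (Q t)))
    (h : ℝ) (hh0 : 0 < h) (hQh : Q h = 0)
    (μ : MeasureTheory.Measure ℝ) (hμ : cc.IsGibbsLike μ h) (r : ℝ) (hr : 0 < r)
    (κ : ℝ) (hκ : 0 < κ)
    (hκlim : Filter.Tendsto
      (fun n : ℕ => (1 / (n : ℝ)) * Real.log
        (∑ σ : Fin n → Fin cc.N,
          ((μ (cc.Jc (List.ofFn σ))).toReal * cc.φnorm (List.ofFn σ) ^ r) ^ (κ / (r + κ))))
      Filter.atTop (nhds 0))
    (Γ : Finset (List (Fin cc.N))) (hΓ : cc.IsFMA Γ) :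
    (∀ A : Set ℝ, MeasurableSet A →
      (cc.Lconst h)⁻¹ *
          ∑ σ ∈ Γ, (μ (cc.Jc σ)).toReal * (μ (cc.wordMap σ ⁻¹' A)).toReal ≤
        (μ A).toReal ∧
      (μ A).toReal ≤
        cc.Lconst h * ∑ σ ∈ Γ, (μ (cc.Jc σ)).toReal * (μ (cc.wordMap σ ⁻¹' A)).toReal) ∧
    ((cc.Lconst h * cc.xi ^ r) ^ (3 * κ / (r + κ)))⁻¹ ≤
      (∑ σ ∈ Γ, ((μ (cc.Jc σ)).toReal * cc.φnorm σ ^ r) ^ (κ / (r + κ))) ∧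
    (∑ σ ∈ Γ, ((μ (cc.Jc σ)).toReal * cc.φnorm σ ^ r) ^ (κ / (r + κ))) ≤
      (cc.Lconst h * cc.xi ^ r) ^ (3 * κ / (r + κ)) := by
  have := hμ.1
  have := hμ.isFiniteMeasure_antichainMeasure (Γ := Γ)
  have hL := CookieCutter.Lconst_pos (cc := cc) (h := h)
  have hcut := hΓ.isPrefixCut
  have hweight := hμ.isQuasiMultiplicative_weight hh0.le hr.le (s := κ / (r + κ)) (by positivity)
  have hlim : Tendsto (fun n : ℕ => (1 / (n : ℝ)) * Real.log (IsQuasiMultiplicative.levelSum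
      (fun σ => (μ.real (cc.Jc σ) * cc.φnorm σ ^ r) ^ (κ / (r + κ))) n)) atTop (nhds 0) := by
    simpa only [IsQuasiMultiplicative.levelSum, sum_wordsOfLength, measureReal_def] using hκlim
  have hexp : (cc.Lconst h * cc.xi ^ r) ^ (3 * κ / (r + κ)) =
      ((cc.Lconst h * cc.xi ^ r) ^ (κ / (r + κ))) ^ 3 := by
    have := Real.rpow_pos_of_pos (CookieCutter.xi_pos (cc := cc)) r
    rw [mul_div_assoc, mul_comm 3, Real.rpow_mul (by positivity), Real.rpow_ofNat]
  rw [hexp]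
  refine ⟨fun A hA => ?_, hweight.inv_le_sum_isPrefixCut hlim hcut,
    hweight.sum_isPrefixCut_le hlim hcut⟩
  have hlower := measureReal_le_mul_of_le_smul hL.le (hμ.antichainMeasure_le_smul hh0.le hcut) A
  have hupper := measureReal_le_mul_of_le_smul hL.le (hμ.le_smul_antichainMeasure hh0.le hcut) A
  rw [hμ.real_antichainMeasure_apply hA] at hlower hupper
  exact ⟨(inv_mul_le_iff₀ hL).2 hlower, hupper⟩
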